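/- Let n ≥ ℓ ≥ 0, let γ_i : X_i × X_i → [0,∞) (1 ≤ i ≤ n) be CND kernels, and let ψ : [0,∞) → ℝ be a continuous function that is completely monotone of order ℓ. Then the kernel 𝕴_ψ^γ(x_{1⃗}, x_{2⃗}) := (−1)^ℓ ψ( ∑_{i=1}^n γ_i(x_i^1, x_i^2) ) is PDI_ℓ on 𝕏_n; equivalently, ∫∫ ψ( ∑_{i=1}^n γ_i(x_i^1, x_i^2) ) dμ(x_{1⃗}) dμ(x_{2⃗}) ≥ 0 for every discrete measure μ ∈ ℳ_ℓ(𝕏_n). -/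

import Mathlib

noncomputable section

open Finset

namespace PDIPaper

variable {ι : Type*} [Fintype ι] [DecidableEq ι] {X : ι → Type*}

/-- The grid point `x_α` determined by grid data `x` and a multi-index `α`. -/
def gridPt {m : ℕ} (x : ∀ i, Fin m → X i) (α : ι → Fin m) : ∀ i, X i :=
  fun i => x i (α i)

/-- The point whose coordinates in `F` come from `a` and whose coordinates outside
`F` come from `b` (the point `a_F + b_{F^c}`). -/
def comb (F : Finset ι) (a b : ∀ i, X i) : ∀ i, X i :=
  fun i => if i ∈ F then a i else b i

/-- Glue an `F`-indexed point and an `Fᶜ`-indexed point into a full point. -/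
def glue (F : Finset ι) (a : ∀ i : {i // i ∈ F}, X i.1)
    (b : ∀ i : {i // i ∈ Fᶜ}, X i.1) : ∀ i, X i :=
  fun i => if h : i ∈ F then a ⟨i, h⟩ else b ⟨i, Finset.mem_compl.mpr h⟩

/-- The coefficients `c` of a discrete measure (supported on a grid with `m` points
in each coordinate) belong to `ℳ_k`: for every coordinate subset `F` of cardinality
`n - k + 1` and every fixed multi-index `β` off `F`, the sum of the coefficients over
the `F`-indices vanishes. -/
def MemM (k : ℕ) {m : ℕ} (c : (ι → Fin m) → ℝ) : Prop :=
  ∀ F : Finset ι, F.card = Fintype.card ι - k + 1 →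
    ∀ β : ι → Fin m,
      (∑ σ : {i // i ∈ F} → Fin m,
        c fun i => if h : i ∈ F then σ ⟨i, h⟩ else β i) = 0

/-- The double integral `∬ I dμ dμ` of a kernel against a discrete measure with
grid `x` and coefficients `c`. -/
def dSum {m : ℕ} (I : (∀ i, X i) → (∀ i, X i) → ℝ)
    (x : ∀ i, Fin m → X i) (c : (ι → Fin m) → ℝ) : ℝ :=
  ∑ α : ι → Fin m, ∑ β : ι → Fin m, c α * c β * I (gridPt x α) (gridPt x β)

/-- `sel x1 x2 α` is the point `x_α` for `α ∈ {1,2}^n`, encoded by `Bool`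
(`false ↦ 1`, `true ↦ 2`). -/
def sel (x1 x2 : ∀ i, X i) (α : ι → Bool) : ∀ i, X i :=
  fun i => if α i then x2 i else x1 i

/-- `n`-symmetry of a kernel: `I (x_α) (x_{3⃗-α}) = I x1 x2` for all `α ∈ {1,2}^n`. -/
def NSymm (I : (∀ i, X i) → (∀ i, X i) → ℝ) : Prop :=
  ∀ (x1 x2 : ∀ i, X i) (α : ι → Bool),
    I (sel x1 x2 α) (sel x1 x2 fun i => !(α i)) = I x1 x2

/-- Complete `n`-symmetry of a kernel. -/
def CompleteNSymm (I : (∀ i, X i) → (∀ i, X i) → ℝ) : Prop :=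
  NSymm I ∧ ∀ (F : Finset ι) (x1 x2 x3 x4 : ∀ i, X i),
    I (comb F x1 x3) (comb F x2 x3) = I (comb F x1 x4) (comb F x2 x4)

/-- Positive definite independent kernel of order `k`: an `n`-symmetric kernel with
`∬ (-1)^k I dμ dμ ≥ 0` for every discrete measure `μ ∈ ℳ_k`. -/
def IsPDI (k : ℕ) (I : (∀ i, X i) → (∀ i, X i) → ℝ) : Prop :=
  NSymm I ∧
    ∀ (m : ℕ) (x : ∀ i, Fin m → X i), (∀ i, Function.Injective (x i)) →
      ∀ c : (ι → Fin m) → ℝ, MemM k c →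
        0 ≤ (-1 : ℝ) ^ k * dSum I x c

/-- Strictly positive definite independent kernel of order `k`. -/
def IsSPDI (k : ℕ) (I : (∀ i, X i) → (∀ i, X i) → ℝ) : Prop :=
  NSymm I ∧
    ∀ (m : ℕ) (x : ∀ i, Fin m → X i), (∀ i, Function.Injective (x i)) →
      ∀ c : (ι → Fin m) → ℝ, MemM k c → (∃ α, c α ≠ 0) →
        0 < (-1 : ℝ) ^ k * dSum I x c

/-- The kernel vanishes on the extended diagonal `Δ_{k-1}^n`, i.e. on pairs of points
agreeing in at least `n - k + 1` coordinates. -/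
def ZeroAtDiag (k : ℕ) (I : (∀ i, X i) → (∀ i, X i) → ℝ) : Prop :=
  ∀ x1 x2 : ∀ i, X i,
    (∃ s : Finset ι, s.card = Fintype.card ι - k + 1 ∧ ∀ i ∈ s, x1 i = x2 i) →
    I x1 x2 = 0

/-- Conditionally negative definite (CND) symmetric kernel. -/
def IsCND {Z : Type*} (γ : Z → Z → ℝ) : Prop :=
  (∀ a b, γ a b = γ b a) ∧
    ∀ (m : ℕ) (z : Fin m → Z) (c : Fin m → ℝ), (∑ i, c i) = 0 →
      (∑ i, ∑ j, c i * c j * γ (z i) (z j)) ≤ 0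

/-- Positive definite kernel (quadratic-form condition). -/
def IsPD {Z : Type*} (K : Z → Z → ℝ) : Prop :=
  ∀ (m : ℕ) (z : Fin m → Z) (c : Fin m → ℝ),
    0 ≤ ∑ i, ∑ j, c i * c j * K (z i) (z j)

/-- Integral of `f` against the discrete measure
`μ_k^n[x1, x2] = δ_{x1} + ∑_{j=0}^{k-1} (-1)^{k-j} C(n-j-1, n-k) ∑_{|F|=j} δ_{x1_F + x2_{F^c}}`. -/
def muInt (k : ℕ) (x1 x2 : ∀ i, X i) (f : (∀ i, X i) → ℝ) : ℝ :=
  f x1 + ∑ j ∈ Finset.range k,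
    (-1 : ℝ) ^ (k - j) *
      ((Nat.choose (Fintype.card ι - j - 1) (Fintype.card ι - k) : ℕ) : ℝ) *
      ∑ F ∈ Finset.powersetCard j (Finset.univ : Finset ι), f (comb F x1 x2)

/-!
Schoenberg's theorem makes every kernel `exp (-r * ∑ i, γ i)` with `r > 0` positive definite, and a
measure `μ ∈ ℳ_ℓ` annihilates every function that depends on fewer than `ℓ` coordinates. Expanding
`(∑ i, γ i (x i) (y i)) ^ k` for fixed `x` gives, when `k < ℓ`, a sum of such functions of `y`.
Hence `∬ g (∑ i, γ i) dμ dμ ≥ 0` for every `g` that is the sum of a polynomial of degree less than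
`ℓ` and a combination of decaying exponentials with nonnegative weights.

These `g` approximate a completely monotone `ψ` of order `ℓ` uniformly on compact subsets of
`(0, ∞)`, which replaces the Bernstein integral representation. For `ℓ = 0` one discretises the
Taylor expansion about a far point, using `(1 - s) ^ k ≈ exp (-(k + 1) * s)`; for `ℓ + 1` one
integrates an approximation of `-ψ'`, which is completely monotone of order `ℓ`. Since the arguments
`∑ i, γ i` may vanish, the approximation is applied to `ψ (· + d)`, and then `d → 0⁺` by continuity.
-/

section Schoenberg

variable {J Z : Type*} {γ : Z → Z → ℝ}

theorem IsCND.sum_mul_nonpos [Fintype J] (hγ : IsCND γ) (z : J → Z) {c : J → ℝ}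
    (hc : ∑ a, c a = 0) : ∑ a, ∑ b, c a * c b * γ (z a) (z b) ≤ 0 := by
  let e := (Fintype.equivFin J).symm
  simp only [← e.sum_comp] at hc ⊢
  exact hγ.2 _ (z ∘ e) (c ∘ e) hc

theorem IsCND.const_mul (hγ : IsCND γ) {r : ℝ} (hr : 0 ≤ r) : IsCND fun a b => r * γ a b := by
  refine ⟨fun a b => congrArg (r * ·) (hγ.1 a b), fun m z c hc => ?_⟩
  simp only [mul_left_comm _ r, ← mul_sum]
  exact mul_nonpos_of_nonneg_of_nonpos hr (hγ.2 m z c hc)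

omit [DecidableEq ι] in
theorem IsCND.sum_pi {γ : ∀ i, X i → X i → ℝ} (hγ : ∀ i, IsCND (γ i)) :
    IsCND fun x y : ∀ i, X i => ∑ i, γ i (x i) (y i) := by
  refine ⟨fun x y => sum_congr rfl fun i _ => (hγ i).1 _ _, fun m z c hc => ?_⟩
  calc ∑ a, ∑ b, c a * c b * ∑ i, γ i (z a i) (z b i)
      = ∑ i, ∑ a, ∑ b, c a * c b * γ i (z a i) (z b i) := by
        simp only [mul_sum]
        exact sum_comm_cycle
    _ ≤ 0 := sum_nonpos fun i _ => (hγ i).2 m (fun a => z a i) c hc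

theorem posSemidef_iff_sum_nonneg [Fintype J] {A : Matrix J J ℝ} (hA : A.IsSymm) :
    A.PosSemidef ↔ ∀ c : J → ℝ, 0 ≤ ∑ a, ∑ b, c a * c b * A a b := by
  have sum_eq (c : J → ℝ) :
      star c ⬝ᵥ A.mulVec c = ∑ a, ∑ b, c a * c b * A a b := by
    simp only [dotProduct, Matrix.mulVec, star_trivial, mul_sum]
    exact sum_congr rfl fun a _ => sum_congr rfl fun b _ => by ring
  simp only [Matrix.posSemidef_iff_dotProduct_mulVec, sum_eq, and_iff_right_iff_imp]
  exact fun _ => by simpa using hA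

theorem posSemidef_map_pow [Finite J] {A : Matrix J J ℝ} (hA : A.PosSemidef) (k : ℕ) :
    (A.map (· ^ k)).PosSemidef := by
  induction k with
  | zero =>
    convert Matrix.posSemidef_vecMulVec_self_star (1 : J → ℝ) using 1
    ext a b
    simp [Matrix.vecMulVec_apply]
  | succ k ih =>
    have map_succ : A.map (· ^ (k + 1)) = (A.map (· ^ k)).hadamard A := by
      ext a b
      exact pow_succ (A a b) k
    exact map_succ ▸ ih.hadamard hA

theorem posSemidef_map_exp [Finite J] {A : Matrix J J ℝ} (hA : A.PosSemidef) :
    (A.map Real.exp).PosSemidef := by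
  cases nonempty_fintype J
  have hA_symm : A.IsSymm := by simpa using hA.isHermitian
  have symm_map (φ : ℝ → ℝ) : (A.map φ).IsSymm := hA_symm.map φ
  rw [posSemidef_iff_sum_nonneg (symm_map _)]
  intro c
  have exp_series (t : ℝ) : HasSum (fun k : ℕ => t ^ k / k.factorial) (Real.exp t) := by
    rw [Real.exp_eq_exp_ℝ]
    exact NormedSpace.expSeries_div_hasSum_exp t
  refine HasSum.nonneg (fun k => ?_) (hasSum_sum fun a _ => hasSum_sum fun b _ =>
    (exp_series (A a b)).mul_left (c a * c b))
  simp only [mul_div_assoc', ← sum_div]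
  exact div_nonneg ((posSemidef_iff_sum_nonneg (symm_map _)).1 (posSemidef_map_pow hA k) c)
    (Nat.cast_nonneg _)

/-- The kernel `⟨v a - v z₀, v b - v z₀⟩` when `γ a b = ‖v a - v b‖² / 2` for a Hilbert space
embedding `v`. It is defined for every `γ`, the term `γ z₀ z₀` accounting for kernels that do not
vanish on the diagonal. -/
def centredKernel (γ : Z → Z → ℝ) (z₀ a b : Z) : ℝ :=
  γ a z₀ + γ b z₀ - γ a b - γ z₀ z₀

theorem IsCND.posSemidef_centredKernel [Finite J] (hγ : IsCND γ) (z₀ : Z) (z : J → Z) :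
    (Matrix.of fun a b => centredKernel γ z₀ (z a) (z b)).PosSemidef := by
  cases nonempty_fintype J
  have h_symm : (Matrix.of fun a b => centredKernel γ z₀ (z a) (z b)).IsSymm := by
    ext a b
    simp only [centredKernel, Matrix.transpose_apply, Matrix.of_apply, hγ.1 (z b) (z a)]
    ring
  refine (posSemidef_iff_sum_nonneg h_symm).2 fun c => ?_
  -- Adding the mass `-∑ c` at `z₀` makes the coefficients sum to zero.
  let c' : Option J → ℝ := fun o => o.elim (-∑ a, c a) c
  have h_nonpos := hγ.sum_mul_nonpos (fun o : Option J => o.elim z₀ z) (c := c')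
    (by simp [c', Fintype.sum_option])
  have h_expand : ∑ a, ∑ b, c a * c b * centredKernel γ z₀ (z a) (z b) =
      -∑ o, ∑ p, c' o * c' p * γ (o.elim z₀ z) (p.elim z₀ z) := by
    simp only [Fintype.sum_option, c', Option.elim, centredKernel, mul_sub, mul_add,
      sum_sub_distrib, sum_add_distrib, hγ.1 z₀, neg_mul, mul_neg, sum_neg_distrib, mul_assoc,
      mul_left_comm _ (∑ a, c a), ← mul_sum, ← sum_mul]
    ring
  simpa only [h_expand, Matrix.of_apply, neg_nonneg]

/-- **Schoenberg's theorem**: `exp (-γ)` is `exp (centredKernel γ z₀)` times a kernel of rank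
one. -/
theorem IsCND.sum_exp_neg_nonneg [Fintype J] (hγ : IsCND γ) (z : J → Z) (c : J → ℝ) :
    0 ≤ ∑ a, ∑ b, c a * c b * Real.exp (-γ (z a) (z b)) := by
  rcases isEmpty_or_nonempty J with _ | ⟨⟨j₀⟩⟩
  · simp
  let z₀ := z j₀
  let u : J → ℝ := fun a => Real.exp (γ z₀ z₀ / 2 - γ (z a) z₀)
  have h_factor : (Matrix.of fun a b => Real.exp (-γ (z a) (z b))) =
      (Matrix.vecMulVec u (star u)).hadamard
        ((Matrix.of fun a b => centredKernel γ z₀ (z a) (z b)).map Real.exp) := by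
    ext a b
    simp only [Matrix.of_apply, Matrix.hadamard_apply, Matrix.vecMulVec_apply, Matrix.map_apply,
      star_trivial, u, centredKernel, ← Real.exp_add]
    ring_nf
  have h_posSemidef := (Matrix.posSemidef_vecMulVec_self_star u).hadamard
    (posSemidef_map_exp (hγ.posSemidef_centredKernel z₀ z))
  rw [← h_factor] at h_posSemidef
  exact (posSemidef_iff_sum_nonneg (by simpa using h_posSemidef.isHermitian)).1 h_posSemidef c

end Schoenberg

section Annihilation

variable {k ℓ m : ℕ} {c : (ι → Fin m) → ℝ}

theorem MemM.sum_mul_eq_zero_of_dependsOn (hc : MemM ℓ c) (hℓ : ℓ ≤ Fintype.card ι)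
    {G : Finset ι} (hG : G.card < ℓ) {h : (ι → Fin m) → ℝ} (hh : DependsOn h (G : Set ι)) :
    ∑ α, c α * h α = 0 := by
  obtain ⟨F, hFG, hF⟩ := exists_subset_card_eq (s := Gᶜ) (n := Fintype.card ι - ℓ + 1)
    (by rw [card_compl]; omega)
  rcases isEmpty_or_nonempty (ι → Fin m) with _ | ⟨⟨α₀⟩⟩
  · simp
  rw [← (Equiv.piEquivPiSubtypeProd (· ∈ F) fun _ => Fin m).symm.sum_comp,
    Fintype.sum_prod_type_right]
  refine sum_eq_zero fun b _ => ?_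
  let β : ι → Fin m := fun i => if hi : i ∈ F then α₀ i else b ⟨i, hi⟩
  have glue_eq (σ : {i // i ∈ F} → Fin m) :
      (Equiv.piEquivPiSubtypeProd (· ∈ F) fun _ => Fin m).symm (σ, b) =
        fun i => if hi : i ∈ F then σ ⟨i, hi⟩ else β i := by
    ext i
    by_cases hi : i ∈ F <;> simp [β, hi]
  have h_const (σ : {i // i ∈ F} → Fin m) :
      h (fun i => if hi : i ∈ F then σ ⟨i, hi⟩ else β i) = h β :=
    hh fun i hi => dif_neg fun hiF => mem_compl.1 (hFG hiF) hi
  simp only [glue_eq, h_const, ← sum_mul, hc F hF β, zero_mul]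

theorem MemM.sum_mul_pow_eq_zero (hc : MemM ℓ c) (hℓ : ℓ ≤ Fintype.card ι) (hk : k < ℓ)
    (g : ι → Fin m → ℝ) : ∑ α, c α * (∑ i, g i (α i)) ^ k = 0 := by
  simp only [Fintype.sum_pow, mul_sum]
  rw [sum_comm]
  refine sum_eq_zero fun p _ => hc.sum_mul_eq_zero_of_dependsOn hℓ (G := univ.image p)
    (card_image_le.trans_lt (by simpa using hk)) fun α β hαβ => ?_
  exact prod_congr rfl fun j _ => by rw [hαβ _ (by simp)]

theorem MemM.sum_mul_eval_eq_zero (hc : MemM ℓ c) (hℓ : ℓ ≤ Fintype.card ι)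
    {P : Polynomial ℝ} (hP : P.degree < ℓ) (g : ι → Fin m → ℝ) :
    ∑ α, c α * P.eval (∑ i, g i (α i)) = 0 := by
  simp only [Polynomial.eval_eq_sum, Polynomial.sum, mul_sum]
  rw [sum_comm]
  refine sum_eq_zero fun k hk => ?_
  have hkℓ : k < ℓ := by
    exact_mod_cast (Polynomial.le_degree_of_mem_supp k hk).trans_lt hP
  simp only [mul_left_comm _ (P.coeff k), ← mul_sum, hc.sum_mul_pow_eq_zero hℓ hkℓ, mul_zero]

end Annihilation

/-- Complete monotonicity of order `ℓ` on the open half-line `(0, ∞)`; continuity at `0` is a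
separate hypothesis wherever it is needed. -/
structure CompletelyMonotoneOfOrder (ℓ : ℕ) (f : ℝ → ℝ) : Prop where
  contDiffOn : ∀ N : ℕ, ContDiffOn ℝ N f (Set.Ioi 0)
  nonneg : ∀ m : ℕ, ℓ ≤ m → ∀ t : ℝ, 0 < t → 0 ≤ (-1 : ℝ) ^ m * iteratedDeriv m f t

/-- The `k`-th term of the Taylor expansion of `f (a - h)` in powers of `h`. For a completely
monotone `f` all these terms are nonnegative when `h ≥ 0`. -/
def leftTaylorTerm (f : ℝ → ℝ) (a h : ℝ) (k : ℕ) : ℝ :=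
  (-1) ^ k * iteratedDeriv k f a / k.factorial * h ^ k

theorem leftTaylorTerm_mul (f : ℝ → ℝ) (a h u : ℝ) (k : ℕ) :
    leftTaylorTerm f a (h * u) k = leftTaylorTerm f a h k * u ^ k := by
  rw [leftTaylorTerm, leftTaylorTerm, mul_pow, mul_assoc]

theorem exists_sub_sum_leftTaylorTerm_eq {f : ℝ → ℝ} {x a : ℝ} {N : ℕ} (hxa : x < a)
    (hf : ∀ t ∈ Set.Icc x a, ContDiffAt ℝ (N + 1 : ℕ) f t) :
    ∃ y ∈ Set.Ioo x a, f x - ∑ k ∈ range (N + 1), leftTaylorTerm f a (a - x) k =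
      (-1) ^ (N + 1) * iteratedDeriv (N + 1) f y / N.factorial * (y - x) ^ N * (a - x) := by
  have h_unique := uniqueDiffOn_uIcc hxa.ne'
  have h_contDiffOn : ContDiffOn ℝ (N + 1 : ℕ) f (Set.uIcc a x) := fun t ht =>
    (hf t (Set.uIcc_of_ge hxa.le ▸ ht)).contDiffWithinAt
  have derivWithin_eq {k : ℕ} (hk : k ≤ N + 1) {t : ℝ} (ht : t ∈ Set.Icc x a) :
      iteratedDerivWithin k f (Set.uIcc a x) t = iteratedDeriv k f t :=
    iteratedDerivWithin_eq_iteratedDeriv h_unique ((hf t ht).of_le (by exact_mod_cast hk))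
      (Set.uIcc_of_ge hxa.le ▸ ht)
  obtain ⟨y, hy, h_remainder⟩ := taylor_mean_remainder_cauchy hxa.ne'
    (h_contDiffOn.of_le (by exact_mod_cast N.le_succ))
    ((h_contDiffOn.differentiableOn_iteratedDerivWithin (by exact_mod_cast N.lt_succ_self)
      h_unique).mono Set.uIoo_subset_uIcc_self)
  rw [Set.uIoo_of_ge hxa.le] at hy
  have neg_pow_sub (k : ℕ) (u v : ℝ) : (u - v) ^ k = (-1) ^ k * (v - u) ^ k := by
    rw [← mul_pow, neg_one_mul, neg_sub]
  have h_taylor : taylorWithinEval f N (Set.uIcc a x) a x =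
      ∑ k ∈ range (N + 1), leftTaylorTerm f a (a - x) k := by
    rw [taylor_within_apply]
    refine sum_congr rfl fun k hk => ?_
    rw [derivWithin_eq (mem_range.1 hk).le ⟨hxa.le, le_rfl⟩, leftTaylorTerm, neg_pow_sub,
      smul_eq_mul]
    ring
  refine ⟨y, hy, ?_⟩
  rw [← h_taylor, h_remainder, derivWithin_eq le_rfl (Set.Ioo_subset_Icc_self hy), neg_pow_sub N x]
  ring

namespace CompletelyMonotoneOfOrder

variable {f : ℝ → ℝ} {ℓ : ℕ}

theorem contDiffAt (hf : CompletelyMonotoneOfOrder ℓ f) (N : ℕ) {t : ℝ} (ht : 0 < t) :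
    ContDiffAt ℝ N f t :=
  (hf.contDiffOn N).contDiffAt (Ioi_mem_nhds ht)

theorem apply_nonneg (hf : CompletelyMonotoneOfOrder 0 f) {t : ℝ} (ht : 0 < t) : 0 ≤ f t := by
  simpa using hf.nonneg 0 le_rfl t ht

theorem leftTaylorTerm_nonneg (hf : CompletelyMonotoneOfOrder 0 f) {a h : ℝ} (ha : 0 < a)
    (hh : 0 ≤ h) (k : ℕ) : 0 ≤ leftTaylorTerm f a h k :=
  mul_nonneg (div_nonneg (hf.nonneg k k.zero_le a ha) (Nat.cast_nonneg _)) (pow_nonneg hh k)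

theorem sum_leftTaylorTerm_le (hf : CompletelyMonotoneOfOrder 0 f) {x a : ℝ} (hx : 0 < x)
    (hxa : x < a) (N : ℕ) : ∑ k ∈ range (N + 1), leftTaylorTerm f a (a - x) k ≤ f x := by
  obtain ⟨y, hy, h_remainder⟩ := exists_sub_sum_leftTaylorTerm_eq hxa (N := N) fun t ht =>
    hf.contDiffAt (N + 1) (hx.trans_le ht.1)
  rw [← sub_nonneg, h_remainder]
  have h_deriv := hf.nonneg (N + 1) (Nat.zero_le _) y (hx.trans hy.1)
  have := sub_nonneg.2 hy.1.le
  have := sub_nonneg.2 hxa.le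
  positivity

theorem leftTaylorTerm_le (hf : CompletelyMonotoneOfOrder 0 f) {x a : ℝ} (hx : 0 < x)
    (hxa : x < a) (k : ℕ) : leftTaylorTerm f a (a - x) k ≤ f x :=
  (single_le_sum (fun j _ => hf.leftTaylorTerm_nonneg (hx.trans hxa) (sub_nonneg.2 hxa.le) j)
    (self_mem_range_succ k)).trans (hf.sum_leftTaylorTerm_le hx hxa k)

/-- The Cauchy remainder at `x` is compared with a single Taylor term at the smaller point `d`,
which is at most `f d`. -/
theorem sub_sum_leftTaylorTerm_le (hf : CompletelyMonotoneOfOrder 0 f) {d b x a : ℝ} (hd : 0 < d)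
    (hdb : d < b) (hbx : b ≤ x) (hxa : x < a) (N : ℕ) :
    f x - ∑ k ∈ range (N + 1), leftTaylorTerm f a (a - x) k ≤
      f d * ((a - b) / (b - d)) * ((N + 1) * ((a - b) / (a - d)) ^ N) := by
  obtain ⟨y, ⟨hxy, hya⟩, h_remainder⟩ := exists_sub_sum_leftTaylorTerm_eq hxa (N := N) fun t ht =>
    hf.contDiffAt (N + 1) (by linarith [ht.1])
  have hyd : 0 < y - d := by linarith
  have h_factor : f x - ∑ k ∈ range (N + 1), leftTaylorTerm f a (a - x) k =
      leftTaylorTerm f y (y - d) (N + 1) * ((a - x) / (y - d)) *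
        ((N + 1) * ((y - x) / (y - d)) ^ N) := by
    rw [h_remainder, leftTaylorTerm, Nat.factorial_succ, div_pow]
    push_cast
    field_simp
    ring
  have h_term := hf.leftTaylorTerm_le hd (show d < y by linarith) (N + 1)
  have h_length : (a - x) / (y - d) ≤ (a - b) / (b - d) := by gcongr <;> linarith
  have h_ratio : (y - x) / (y - d) ≤ (a - b) / (a - d) := by
    rw [div_le_div_iff₀ hyd (by linarith)]
    nlinarith
  have : 0 ≤ (y - x) / (y - d) := div_nonneg (by linarith) hyd.le
  have h_length_nonneg : 0 ≤ (a - x) / (y - d) := div_nonneg (by linarith) hyd.le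
  have hfd := hf.apply_nonneg hd
  have h_bound_nonneg := mul_nonneg hfd (h_length_nonneg.trans h_length)
  rw [h_factor]
  gcongr

theorem exists_sub_sum_leftTaylorTerm_le (hf : CompletelyMonotoneOfOrder 0 f) {b a ε : ℝ}
    (hb : 0 < b) (hba : b < a) (hε : 0 < ε) :
    ∃ N : ℕ, ∀ x ∈ Set.Ico b a,
      f x - ∑ k ∈ range (N + 1), leftTaylorTerm f a (a - x) k ≤ ε := by
  have hq_nonneg : 0 ≤ (a - b) / (a - b / 2) := div_nonneg (by linarith) (by linarith)
  have hq_lt : (a - b) / (a - b / 2) < 1 := (div_lt_one (by linarith)).2 (by linarith)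
  have h_tendsto : Filter.Tendsto (fun N : ℕ => f (b / 2) * ((a - b) / (b - b / 2)) *
      ((N + 1) * ((a - b) / (a - b / 2)) ^ N)) Filter.atTop (nhds 0) := by
    simpa [add_mul] using ((tendsto_self_mul_const_pow_of_lt_one hq_nonneg hq_lt).add
      (tendsto_pow_atTop_nhds_zero_of_lt_one hq_nonneg hq_lt)).const_mul
        (f (b / 2) * ((a - b) / (b - b / 2)))
  obtain ⟨N, hN⟩ := (h_tendsto.eventually (eventually_le_nhds hε)).exists
  exact ⟨N, fun x hx => (hf.sub_sum_leftTaylorTerm_le (by linarith) (by linarith) hx.1 hx.2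
    N).trans hN⟩

theorem neg_deriv (hf : CompletelyMonotoneOfOrder (ℓ + 1) f) :
    CompletelyMonotoneOfOrder ℓ fun t => -deriv f t where
  contDiffOn N := ((hf.contDiffOn (N + 1)).deriv_of_isOpen isOpen_Ioi (by simp)).neg
  nonneg m hm t ht := by
    simpa [iteratedDeriv_fun_neg, ← iteratedDeriv_succ', pow_succ] using
      hf.nonneg (m + 1) (by omega) t ht

end CompletelyMonotoneOfOrder

theorem abs_pow_sub_exp_le {s : ℝ} (hs₀ : 0 ≤ s) (hs₁ : s ≤ 1) (k : ℕ) :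
    |(1 - s) ^ k - Real.exp (-((k + 1) * s))| ≤ s := by
  have hexp_le : Real.exp (-s) ≤ 1 := Real.exp_le_one_iff.2 (by linarith)
  have exp_eq (j : ℕ) : Real.exp (-((j + 1) * s)) = Real.exp (-s) ^ (j + 1) := by
    rw [← Real.exp_nat_mul]
    push_cast
    ring_nf
  induction k with
  | zero =>
    rw [exp_eq, pow_zero, zero_add, pow_one, abs_of_nonneg (sub_nonneg.2 hexp_le)]
    linarith [Real.add_one_le_exp (-s)]
  | succ k ih =>
    have h_quadratic : |1 - s - Real.exp (-s)| ≤ s ^ 2 := by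
      have := Real.abs_exp_sub_one_sub_id_le (x := -s) (by rwa [abs_neg, abs_of_nonneg hs₀])
      rwa [neg_sq, abs_sub_comm, show -s - (Real.exp (-s) - 1) = 1 - s - Real.exp (-s) by ring]
        at this
    rw [exp_eq] at ih ⊢
    calc |(1 - s) ^ (k + 1) - Real.exp (-s) ^ (k + 1 + 1)|
        = |(1 - s) * ((1 - s) ^ k - Real.exp (-s) ^ (k + 1)) +
            Real.exp (-s) ^ (k + 1) * (1 - s - Real.exp (-s))| := by ring_nf
      _ ≤ (1 - s) * |(1 - s) ^ k - Real.exp (-s) ^ (k + 1)| +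
            Real.exp (-s) ^ (k + 1) * |1 - s - Real.exp (-s)| := by
        refine (abs_add_le _ _).trans_eq ?_
        rw [abs_mul, abs_mul, abs_of_nonneg (sub_nonneg.2 hs₁),
          abs_of_nonneg (pow_nonneg (Real.exp_nonneg (-s)) (k + 1))]
      _ ≤ (1 - s) * s + 1 * s ^ 2 := by
        have := pow_le_one₀ (n := k + 1) (Real.exp_nonneg (-s)) hexp_le
        have := sub_nonneg.2 hs₁
        gcongr
      _ = s := by ring

theorem abs_sum_mul_pow_sub_sum_mul_exp_le {w : ℕ → ℝ} (hw : ∀ k, 0 ≤ w k) {s : ℝ} (hs₀ : 0 ≤ s)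
    (hs₁ : s ≤ 1) (N : ℕ) :
    |∑ k ∈ range N, w k * (1 - s) ^ k - ∑ k ∈ range N, w k * Real.exp (-((k + 1) * s))| ≤
      (∑ k ∈ range N, w k) * s := by
  rw [← sum_sub_distrib, sum_mul]
  refine (abs_sum_le_sum_abs _ _).trans (sum_le_sum fun k _ => ?_)
  rw [← mul_sub, abs_mul, abs_of_nonneg (hw k)]
  exact mul_le_mul_of_nonneg_left (abs_pow_sub_exp_le hs₀ hs₁ k) (hw k)

theorem exists_mem_degreeLT_derivative_eq {K : Type*} [Field K] [CharZero K] {ℓ : ℕ}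
    {P : Polynomial K}
    (hP : P ∈ Polynomial.degreeLT K ℓ) :
    ∃ Q ∈ Polynomial.degreeLT K (ℓ + 1), Polynomial.derivative Q = P := by
  refine ⟨∑ k ∈ P.support, Polynomial.monomial (k + 1) (P.coeff k / (k + 1)),
    Submodule.sum_mem _ fun k hk => Polynomial.mem_degreeLT.2 ?_, ?_⟩
  · have hkℓ : k < ℓ := by
      exact_mod_cast (Polynomial.le_degree_of_mem_supp k hk).trans_lt
        (Polynomial.mem_degreeLT.1 hP)
    exact (Polynomial.degree_monomial_le _ _).trans_lt (by exact_mod_cast Nat.succ_lt_succ hkℓ)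
  · conv_rhs => rw [P.as_sum_support]
    simp only [Polynomial.derivative_sum, Polynomial.derivative_monomial, Nat.add_sub_cancel,
      Nat.cast_succ]
    exact sum_congr rfl fun k _ => by rw [div_mul_cancel₀ _ (Nat.cast_add_one_ne_zero k)]

/-- A polynomial of degree less than `ℓ` plus a combination of decaying exponentials with
nonnegative weights: the functions that approximate every completely monotone function of
order `ℓ`. -/
def IsExpPolynomial (ℓ : ℕ) (g : ℝ → ℝ) : Prop :=
  ∃ P ∈ Polynomial.degreeLT ℝ ℓ, ∃ (N : ℕ) (w r : ℕ → ℝ), (∀ k, 0 ≤ w k) ∧ (∀ k, 0 < r k) ∧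
    g = fun t => P.eval t + ∑ k ∈ range N, w k * Real.exp (-(r k * t))

theorem IsExpPolynomial.exists_hasDerivAt_neg {ℓ : ℕ} {h : ℝ → ℝ} (hh : IsExpPolynomial ℓ h)
    (t₀ y₀ : ℝ) :
    ∃ g, IsExpPolynomial (ℓ + 1) g ∧ g t₀ = y₀ ∧ ∀ t, HasDerivAt g (-h t) t := by
  obtain ⟨P, hP, N, w, r, hw, hr, rfl⟩ := hh
  obtain ⟨Q, hQ, rfl⟩ := exists_mem_degreeLT_derivative_eq hP
  let E : ℝ → ℝ := fun t => ∑ k ∈ range N, w k / r k * Real.exp (-(r k * t))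
  let C := Polynomial.C (y₀ + Q.eval t₀ - E t₀)
  have hC : C ∈ Polynomial.degreeLT ℝ (ℓ + 1) :=
    Polynomial.mem_degreeLT.2 (Polynomial.degree_C_le.trans_lt (by exact_mod_cast ℓ.succ_pos))
  refine ⟨fun t => (C - Q).eval t + E t, ⟨C - Q, Submodule.sub_mem _ hC hQ, N, fun k => w k / r k,
    r, fun k => div_nonneg (hw k) (hr k).le, hr, rfl⟩, ?_, fun t => ?_⟩
  · simp only [C, Polynomial.eval_sub, Polynomial.eval_C]
    ring
  · have hE : HasDerivAt E (-∑ k ∈ range N, w k * Real.exp (-(r k * t))) t := by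
      rw [← sum_neg_distrib]
      refine HasDerivAt.fun_sum fun k _ => ?_
      refine (((hasDerivAt_id t).const_mul (r k)).neg.exp.const_mul (w k / r k)).congr_deriv ?_
      have := (hr k).ne'
      simp only [id, Pi.neg_apply]
      field_simp
    refine (((C - Q).hasDerivAt t).add hE).congr_deriv ?_
    simp only [C, Polynomial.derivative_sub, Polynomial.derivative_C, zero_sub,
      Polynomial.eval_neg]
    ring

namespace CompletelyMonotoneOfOrder

variable {f : ℝ → ℝ} {ℓ : ℕ} {a b ε : ℝ}

/-- With `s = (t - a) / R`, the Taylor terms about the far point `a + R` are nonnegative multiples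
of `(1 - s) ^ k`, which is close to `exp (-((k + 1) * s))` because `s` is small. -/
theorem exists_isExpPolynomial_abs_sum_leftTaylorTerm_sub_le (hf : CompletelyMonotoneOfOrder 0 f)
    (ha : 0 < a) {R : ℝ} (hR : 0 < R) (hbR : b - a ≤ R) (N : ℕ) :
    ∃ g, IsExpPolynomial 0 g ∧ ∀ t ∈ Set.Icc a b,
      |∑ k ∈ range (N + 1), leftTaylorTerm f (a + R) (a + R - t) k - g t| ≤
        f a * ((b - a) / R) := by
  let w := leftTaylorTerm f (a + R) R
  have hw : ∀ k, 0 ≤ w k := hf.leftTaylorTerm_nonneg (by linarith) hR.le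
  have h_sum_w : ∑ k ∈ range (N + 1), w k ≤ f a := by
    simpa [w] using hf.sum_leftTaylorTerm_le (a := a + R) ha (by linarith) N
  refine ⟨_, ⟨0, Submodule.zero_mem _, N + 1, fun k => w k * Real.exp ((k + 1) / R * a),
    fun k => (k + 1) / R, fun k => mul_nonneg (hw k) (Real.exp_nonneg _), fun k => by positivity,
    rfl⟩, fun t ht => ?_⟩
  let s := (t - a) / R
  have hs₀ : 0 ≤ s := div_nonneg (sub_nonneg.2 ht.1) hR.le
  have hs : s ≤ (b - a) / R := div_le_div_of_nonneg_right (by linarith [ht.2]) hR.le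
  have hs₁ : s ≤ 1 := hs.trans ((div_le_one hR).2 hbR)
  have h_arg : a + R - t = R * (1 - s) := by
    simp only [s]
    field_simp
    ring
  have h_exp (k : ℕ) : w k * Real.exp ((k + 1) / R * a) * Real.exp (-((k + 1) / R * t)) =
      w k * Real.exp (-((k + 1) * s)) := by
    rw [mul_assoc, ← Real.exp_add]
    congr 2
    simp only [s]
    ring
  simp only [h_arg, leftTaylorTerm_mul, Polynomial.eval_zero, zero_add, h_exp]
  exact (abs_sum_mul_pow_sub_sum_mul_exp_le hw hs₀ hs₁ (N + 1)).trans
    (mul_le_mul h_sum_w hs hs₀ (hf.apply_nonneg ha))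

theorem exists_isExpPolynomial_zero_abs_sub_le (hf : CompletelyMonotoneOfOrder 0 f) (ha : 0 < a)
    (hε : 0 < ε) : ∃ g, IsExpPolynomial 0 g ∧ ∀ t ∈ Set.Icc a b, |f t - g t| ≤ ε := by
  obtain ⟨R, ⟨hR_small, hR_pos⟩, hR_gt⟩ :
      ∃ R, (f a * (b - a) / R < ε / 2 ∧ 0 < R) ∧ b - a < R :=
    ((((tendsto_const_nhds.div_atTop Filter.tendsto_id).eventually_lt_const (half_pos hε)).and
      (Filter.eventually_gt_atTop 0)).and (Filter.eventually_gt_atTop (b - a))).exists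
  obtain ⟨N, hN⟩ := hf.exists_sub_sum_leftTaylorTerm_le (a := a + R) ha (by linarith)
    (half_pos hε)
  obtain ⟨g, hg, hg_approx⟩ :=
    hf.exists_isExpPolynomial_abs_sum_leftTaylorTerm_sub_le ha hR_pos hR_gt.le N
  refine ⟨g, hg, fun t ht => ?_⟩
  have h_taylor : |f t - ∑ k ∈ range (N + 1), leftTaylorTerm f (a + R) (a + R - t) k| ≤ ε / 2 := by
    rw [abs_of_nonneg (sub_nonneg.2 (hf.sum_leftTaylorTerm_le (ha.trans_le ht.1)
      (by linarith [ht.2]) N))]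
    exact hN t ⟨ht.1, by linarith [ht.2]⟩
  rw [mul_div_assoc] at hR_small
  linarith [abs_sub_le (f t) (∑ k ∈ range (N + 1), leftTaylorTerm f (a + R) (a + R - t) k) (g t),
    hg_approx t ht]

theorem exists_isExpPolynomial_abs_sub_le (hf : CompletelyMonotoneOfOrder ℓ f) (ha : 0 < a)
    (hε : 0 < ε) : ∃ g, IsExpPolynomial ℓ g ∧ ∀ t ∈ Set.Icc a b, |f t - g t| ≤ ε := by
  induction ℓ generalizing f ε with
  | zero => exact hf.exists_isExpPolynomial_zero_abs_sub_le ha hε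
  | succ ℓ ih =>
    obtain ⟨δ, hδ, hδε⟩ := exists_pos_mul_lt hε (b - a)
    obtain ⟨h, hh, hh_approx⟩ := ih hf.neg_deriv hδ
    obtain ⟨g, hg, hg_eq, hg_deriv⟩ := hh.exists_hasDerivAt_neg a (f a)
    refine ⟨g, hg, fun t ht => ?_⟩
    have h_mvt := (convex_Icc a b).norm_image_sub_le_of_norm_hasDerivWithin_le
      (f := fun t => f t - g t) (f' := fun t => deriv f t - -h t) (C := δ) (x := a) (y := t)
      (fun s hs => (((hf.contDiffAt 1 (ha.trans_le hs.1)).differentiableAt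
        (by simp)).hasDerivAt.sub (hg_deriv s)).hasDerivWithinAt)
      (fun s hs => by
        have := hh_approx s hs
        rwa [← abs_neg, show -(-deriv f s - h s) = deriv f s - -h s by ring] at this)
      ⟨le_rfl, ht.1.trans ht.2⟩ ht
    simp only [hg_eq, sub_self, sub_zero, Real.norm_eq_abs, abs_of_nonneg (sub_nonneg.2 ht.1)]
      at h_mvt
    nlinarith [ht.2]

end CompletelyMonotoneOfOrder

theorem IsExpPolynomial.comp_add_const {ℓ : ℕ} {g : ℝ → ℝ} (hg : IsExpPolynomial ℓ g) (d : ℝ) :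
    IsExpPolynomial ℓ fun t => g (t + d) := by
  obtain ⟨P, hP, N, w, r, hw, hr, rfl⟩ := hg
  refine ⟨Polynomial.taylor d P, ?_, N, fun k => w k * Real.exp (-(r k * d)), r,
    fun k => mul_nonneg (hw k) (Real.exp_nonneg _), hr, ?_⟩
  · rwa [Polynomial.mem_degreeLT, Polynomial.degree_taylor, ← Polynomial.mem_degreeLT]
  · ext t
    simp only [Polynomial.taylor_eval, mul_assoc, ← Real.exp_add]
    ring_nf

section Positivity

variable {J : Type*} [Fintype J] {ℓ : ℕ} {C t : J → ℝ}

theorem IsExpPolynomial.sum_mul_nonneg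
    (h_poly : ∀ P ∈ Polynomial.degreeLT ℝ ℓ, ∑ j, C j * P.eval (t j) = 0)
    (h_exp : ∀ r, 0 < r → 0 ≤ ∑ j, C j * Real.exp (-(r * t j))) {g : ℝ → ℝ}
    (hg : IsExpPolynomial ℓ g) : 0 ≤ ∑ j, C j * g (t j) := by
  obtain ⟨P, hP, N, w, r, hw, hr, rfl⟩ := hg
  calc 0 ≤ ∑ k ∈ range N, w k * ∑ j, C j * Real.exp (-(r k * t j)) :=
        sum_nonneg fun k _ => mul_nonneg (hw k) (h_exp (r k) (hr k))
    _ = ∑ j, C j * (P.eval (t j) + ∑ k ∈ range N, w k * Real.exp (-(r k * t j))) := by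
        simp only [mul_add, sum_add_distrib, h_poly P hP, zero_add, mul_sum]
        rw [sum_comm]
        simp only [mul_left_comm]

theorem CompletelyMonotoneOfOrder.sum_mul_add_const_nonneg {f : ℝ → ℝ}
    (hf : CompletelyMonotoneOfOrder ℓ f) (ht : ∀ j, 0 ≤ t j)
    (h_poly : ∀ P ∈ Polynomial.degreeLT ℝ ℓ, ∑ j, C j * P.eval (t j) = 0)
    (h_exp : ∀ r, 0 < r → 0 ≤ ∑ j, C j * Real.exp (-(r * t j))) {d : ℝ} (hd : 0 < d) :
    0 ≤ ∑ j, C j * f (t j + d) := by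
  refine le_of_forall_pos_le_add fun ε hε => ?_
  obtain ⟨δ, hδ, hδε⟩ := exists_pos_mul_lt hε (∑ j, |C j|)
  obtain ⟨g, hg, hg_approx⟩ :=
    hf.exists_isExpPolynomial_abs_sub_le (b := (∑ j, t j) + d) hd hδ
  have h_close (j : J) : |f (t j + d) - g (t j + d)| ≤ δ := hg_approx _
    ⟨by linarith [ht j], by linarith [single_le_sum (fun i _ => ht i) (mem_univ j)]⟩
  calc 0 ≤ ∑ j, C j * g (t j + d) := (hg.comp_add_const d).sum_mul_nonneg h_poly h_exp
    _ ≤ ∑ j, (C j * f (t j + d) + |C j| * δ) := sum_le_sum fun j _ => by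
        have h_le : |C j * (g (t j + d) - f (t j + d))| ≤ |C j| * δ := by
          rw [abs_mul, abs_sub_comm]
          exact mul_le_mul_of_nonneg_left (h_close j) (abs_nonneg _)
        linarith [le_abs_self (C j * (g (t j + d) - f (t j + d)))]
    _ ≤ ∑ j, C j * f (t j + d) + ε := by
        rw [sum_add_distrib, ← sum_mul]
        linarith

theorem CompletelyMonotoneOfOrder.sum_mul_nonneg {f : ℝ → ℝ}
    (hf : CompletelyMonotoneOfOrder ℓ f) (hf_cont : ContinuousOn f (Set.Ici 0))
    (ht : ∀ j, 0 ≤ t j)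
    (h_poly : ∀ P ∈ Polynomial.degreeLT ℝ ℓ, ∑ j, C j * P.eval (t j) = 0)
    (h_exp : ∀ r, 0 < r → 0 ≤ ∑ j, C j * Real.exp (-(r * t j))) :
    0 ≤ ∑ j, C j * f (t j) := by
  have h_cont : ContinuousOn (fun d => ∑ j, C j * f (t j + d)) (Set.Ici 0) := by
    refine continuousOn_finsetSum _ fun j _ => continuousOn_const.mul ?_
    exact hf_cont.comp (by fun_prop) fun d hd => add_nonneg (ht j) hd
  have h_tendsto := (h_cont 0 Set.self_mem_Ici).mono Set.Ioi_subset_Ici_self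
  have h_limit := ge_of_tendsto h_tendsto <| Filter.eventually_of_mem self_mem_nhdsWithin
    fun d hd => hf.sum_mul_add_const_nonneg ht h_poly h_exp hd
  simpa only [add_zero] using h_limit

end Positivity

omit [DecidableEq ι] in
theorem nSymm_comp_sum {γ : ∀ i, X i → X i → ℝ} (hγ : ∀ i a b, γ i a b = γ i b a) (φ : ℝ → ℝ) :
    NSymm fun x₁ x₂ : ∀ i, X i => φ (∑ i, γ i (x₁ i) (x₂ i)) := by
  refine fun x₁ x₂ α => congrArg φ (sum_congr rfl fun i _ => ?_)
  cases h : α i <;> simp [sel, h, hγ i (x₂ i)]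

theorem dSum_const_mul {m : ℕ} (r : ℝ) (I : (∀ i, X i) → (∀ i, X i) → ℝ)
    (x : ∀ i, Fin m → X i) (c : (ι → Fin m) → ℝ) :
    dSum (fun x₁ x₂ => r * I x₁ x₂) x c = r * dSum I x c := by
  simp only [dSum, mul_sum, mul_left_comm r]

theorem dSum_completelyMonotone_comp_sum_nonneg {ℓ m : ℕ} (hℓ : ℓ ≤ Fintype.card ι)
    {γ : ∀ i, X i → X i → ℝ} (hγ_nonneg : ∀ x₁ x₂ : ∀ i, X i, 0 ≤ ∑ i, γ i (x₁ i) (x₂ i))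
    (hγ : ∀ i, IsCND (γ i)) {ψ : ℝ → ℝ} (hψ : CompletelyMonotoneOfOrder ℓ ψ)
    (hψ_cont : ContinuousOn ψ (Set.Ici 0)) (x : ∀ i, Fin m → X i) {c : (ι → Fin m) → ℝ}
    (hc : MemM ℓ c) :
    0 ≤ dSum (fun x₁ x₂ : ∀ i, X i => ψ (∑ i, γ i (x₁ i) (x₂ i))) x c := by
  have h_nonneg := hψ.sum_mul_nonneg hψ_cont (J := (ι → Fin m) × (ι → Fin m))
    (C := fun p => c p.1 * c p.2)
    (t := fun p => ∑ i, γ i (gridPt x p.1 i) (gridPt x p.2 i)) (fun p => hγ_nonneg _ _)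
    (fun P hP => ?_) (fun r hr => ?_)
  · simpa only [dSum, Fintype.sum_prod_type] using h_nonneg
  · simp only [Fintype.sum_prod_type, mul_assoc, ← mul_sum, gridPt]
    exact sum_eq_zero fun α _ => mul_eq_zero_of_right _ <|
      hc.sum_mul_eval_eq_zero hℓ (Polynomial.mem_degreeLT.1 hP) fun i j => γ i (x i (α i)) (x i j)
  · simpa only [Fintype.sum_prod_type] using
      ((IsCND.sum_pi hγ).const_mul hr.le).sum_exp_neg_nonneg (gridPt x) c

theorem statement16_general {ℓ : ℕ} (hℓ : ℓ ≤ Fintype.card ι) {γ : ∀ i, X i → X i → ℝ}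
    (hγ_nonneg : ∀ x₁ x₂ : ∀ i, X i, 0 ≤ ∑ i, γ i (x₁ i) (x₂ i)) (hγ : ∀ i, IsCND (γ i))
    {ψ : ℝ → ℝ} (hψ : CompletelyMonotoneOfOrder ℓ ψ) (hψ_cont : ContinuousOn ψ (Set.Ici 0)) :
    IsPDI ℓ (fun x₁ x₂ : ∀ i, X i => (-1 : ℝ) ^ ℓ * ψ (∑ i, γ i (x₁ i) (x₂ i))) ∧
      ∀ (m : ℕ) (x : ∀ i, Fin m → X i) (c : (ι → Fin m) → ℝ), MemM ℓ c →
        0 ≤ dSum (fun x₁ x₂ : ∀ i, X i => ψ (∑ i, γ i (x₁ i) (x₂ i))) x c := by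
  have h_dSum {m : ℕ} (x : ∀ i, Fin m → X i) (c : (ι → Fin m) → ℝ) (hc : MemM ℓ c) :=
    dSum_completelyMonotone_comp_sum_nonneg hℓ hγ_nonneg hγ hψ hψ_cont x hc
  refine ⟨⟨nSymm_comp_sum (fun i => (hγ i).1) fun t => (-1) ^ ℓ * ψ t, fun m x _ c hc => ?_⟩,
    fun m x c hc => h_dSum x c hc⟩
  rw [dSum_const_mul, ← mul_assoc, ← mul_pow, neg_one_mul, neg_neg, one_pow, one_mul]
  exact h_dSum x c hc

/-- `ψ` is a continuous completely monotone function of order `ℓ`: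
continuous on `[0,∞)`, `C^∞` on `(0,∞)`, with `(-1)^m ψ^{(m)}(t) ≥ 0` for every
`m ≥ ℓ` and `t > 0`. -/
theorem statement16 {n ℓ : ℕ} (hℓ : ℓ ≤ n) (X : Fin n → Type*)
    (γ : ∀ i, X i → X i → ℝ) (hγpos : ∀ i a b, 0 ≤ γ i a b)
    (hγ : ∀ i, IsCND (γ i))
    (ψ : ℝ → ℝ) (hψc : ContinuousOn ψ (Set.Ici (0 : ℝ)))
    (hψs : ∀ N : ℕ, ContDiffOn ℝ N ψ (Set.Ioi (0 : ℝ)))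
    (hψm : ∀ m : ℕ, ℓ ≤ m → ∀ t : ℝ, 0 < t → 0 ≤ (-1 : ℝ) ^ m * iteratedDeriv m ψ t) :
    IsPDI ℓ (fun x1 x2 : ∀ i, X i => (-1 : ℝ) ^ ℓ * ψ (∑ i, γ i (x1 i) (x2 i))) ∧
      ∀ (m : ℕ) (x : ∀ i, Fin m → X i), (∀ i, Function.Injective (x i)) →
        ∀ c : (Fin n → Fin m) → ℝ, MemM ℓ c →
          0 ≤ dSum (fun x1 x2 : ∀ i, X i => ψ (∑ i, γ i (x1 i) (x2 i))) x c := by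
  have h := statement16_general (hℓ.trans_eq (Fintype.card_fin n).symm)
    (fun _ _ => sum_nonneg fun i _ => hγpos i _ _) hγ ⟨hψs, hψm⟩ hψc
  exact ⟨h.1, fun m x _ => h.2 m x⟩

end PDIPaper
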